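/- Let μ be a probability measure on a measurable space Ω and let A, B, C be events with μ(B) > 0 and p(A|B) > 0 (hence μ(A) > 0). If p(C|B) = 1 and p(B|A) > 0, then p(C|A) > 0, that is, p(¬C|A) < 1. (Theorem 7 of the paper: the knowledge base (B ⇝ C, A ⇸ ¬B, B ⇸ ¬A) p-entails A ⇸ ¬C.) -/

import Mathlib

open MeasureTheory

/-- Conditional probability `p(E|H) = μ(E ∩ H) / μ(H)` as a real number. -/
noncomputable def condProb {Ω : Type*} [MeasurableSpace Ω] (μ : Measure Ω) (E H : Set Ω) : ℝ :=
  (μ (E ∩ H)).toReal / (μ H).toReal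

section

variable {Ω : Type*} [MeasurableSpace Ω] {μ : Measure Ω} {E F H : Set Ω}

theorem condProb_eq_measureReal_div : condProb μ E H = μ.real (E ∩ H) / μ.real H := rfl

theorem measureReal_ne_zero_of_condProb_ne_zero (h : condProb μ E H ≠ 0) : μ.real H ≠ 0 :=
  (div_ne_zero_iff.1 h).2

theorem measure_ne_top_of_measureReal_ne_zero (h : μ.real H ≠ 0) : μ H ≠ ⊤ :=
  (ENNReal.toReal_ne_zero.1 h).2

theorem condProb_compl (hE : NullMeasurableSet E μ) (hH : μ.real H ≠ 0) :
    condProb μ Eᶜ H = 1 - condProb μ E H := by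
  have hsplit : μ.real (E ∩ H) + μ.real (Eᶜ ∩ H) = μ.real H := by
    simpa only [Set.inter_comm, Set.sdiff_eq] using
      measureReal_inter_add_sdiff₀ hE (measure_ne_top_of_measureReal_ne_zero hH)
  rw [condProb_eq_measureReal_div, condProb_eq_measureReal_div, eq_sub_iff_add_eq', ← add_div,
    hsplit, div_self hH]

theorem ae_le_of_condProb_eq_one (hE : NullMeasurableSet E μ) (h : condProb μ E H = 1) :
    H ≤ᵐ[μ] E := by
  have hH : μ.real H ≠ 0 := measureReal_ne_zero_of_condProb_ne_zero (h ▸ one_ne_zero)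
  have hcompl : condProb μ Eᶜ H = 0 := by rw [condProb_compl hE hH, h, sub_self]
  have hdiff : μ.real (H \ E) = 0 := by
    rw [Set.sdiff_eq, Set.inter_comm]
    exact (div_eq_zero_iff.1 hcompl).resolve_right hH
  have hfin : μ (H \ E) ≠ ⊤ :=
    measure_ne_top_of_subset Set.sdiff_subset (measure_ne_top_of_measureReal_ne_zero hH)
  exact ae_le_set.2 ((measureReal_eq_zero_iff hfin).1 hdiff)

theorem condProb_mono_ae (h : E ≤ᵐ[μ] F) : condProb μ E H ≤ condProb μ F H := by
  -- `μ.real H = 0` includes the case `μ H = ∞`; both sides are then `0`.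
  by_cases hH : μ.real H = 0
  · simp only [condProb_eq_measureReal_div, hH, div_zero, le_refl]
  · have hfin : μ (F ∩ H) ≠ ⊤ :=
      measure_ne_top_of_subset Set.inter_subset_right (measure_ne_top_of_measureReal_ne_zero hH)
    have hinter : μ (E ∩ H) ≤ μ (F ∩ H) :=
      measure_mono_ae (ae_le_set_inter h Filter.EventuallyLE.rfl)
    exact div_le_div_of_nonneg_right (ENNReal.toReal_mono hfin hinter) measureReal_nonneg

end

theorem modus_darii_strong_import_general {Ω : Type*} [MeasurableSpace Ω]
    {μ : Measure Ω} {A B C : Set Ω} (hC : NullMeasurableSet C μ)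
    (hCB : condProb μ C B = 1) (hBA : 0 < condProb μ B A) :
    0 < condProb μ C A ∧ condProb μ Cᶜ A < 1 := by
  have hCA : 0 < condProb μ C A :=
    hBA.trans_le (condProb_mono_ae (ae_le_of_condProb_eq_one hC hCB))
  have hA : μ.real A ≠ 0 := measureReal_ne_zero_of_condProb_ne_zero hBA.ne'
  exact ⟨hCA, (condProb_compl hC hA).trans_lt (sub_lt_self 1 hCA)⟩

theorem modus_darii_strong_import {Ω : Type*} [MeasurableSpace Ω]
    (μ : Measure Ω) [IsProbabilityMeasure μ] (A B C : Set Ω)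
    (hA : MeasurableSet A) (hB : MeasurableSet B) (hC : MeasurableSet C)
    (hBpos : 0 < μ B) (hAB : 0 < condProb μ A B)
    (h1 : condProb μ C B = 1) (h2 : 0 < condProb μ B A) :
    0 < condProb μ C A ∧ condProb μ Cᶜ A < 1 :=
  modus_darii_strong_import_general hC.nullMeasurableSet h1 h2
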